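/- arXiv:1407.6448 — 2 statements merged into one kernel-verified Lean document; each statement's English description precedes it below -/
import Mathlib

section
/- Let L be a real m×m matrix with L ≥ 0 on ℂᵐ, let N be a real symmetric m×m matrix with N ≥ 0 on ℂᵐ and Ker(N) = Ker(L), and let M be a real symmetric m×m matrix. Then M > 0 on Ker(L) if and only if there exists α > 0 such that αM + N > 0 on ℂᵐ. (In the paper this is applied with M = (K(ω)A(ω))₁ and N = (SL)₁ + L₁, showing that under conditions (A) and (S) the positivity (K(ω)A(ω))₁ > 0 on Ker(L) is equivalent to α(K(ω)A(ω))₁ + (SL)₁ + L₁ > 0 on ℂᵐ for suitably small α > 0.) -/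
open Matrix BigOperators Finset

noncomputable section

/-- Complexification of a real matrix. -/
def cmap {a b : ℕ} (X : Matrix (Fin a) (Fin b) ℝ) : Matrix (Fin a) (Fin b) ℂ :=
  X.map (fun x => (x : ℂ))

/-- Real part of the standard Hermitian inner product `⟨x, y⟩ = ∑ xᵢ conj yᵢ` on `ℂᵐ`. -/
def reIP {m : ℕ} (x y : Fin m → ℂ) : ℝ := (∑ i, x i * (starRingEnd ℂ) (y i)).re

/-- Symmetric part `X₁ = (X + Xᵀ)/2` of a real square matrix. -/
def symP {m : ℕ} (X : Matrix (Fin m) (Fin m) ℝ) : Matrix (Fin m) (Fin m) ℝ :=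
  (2⁻¹ : ℝ) • (X + Xᵀ)

/-- Skew-symmetric part `X₂ = (X − Xᵀ)/2` of a real square matrix. -/
def skewP {m : ℕ} (X : Matrix (Fin m) (Fin m) ℝ) : Matrix (Fin m) (Fin m) ℝ :=
  (2⁻¹ : ℝ) • (X - Xᵀ)

/-- Kernel of (the complexification of) a real matrix, as a subset of `ℂᵐ`. -/
def kerC {m : ℕ} (L : Matrix (Fin m) (Fin m) ℝ) : Set (Fin m → ℂ) :=
  {z | (cmap L).mulVec z = 0}

/-- Euclidean norm on `ℂᵐ`. -/
def cnrm {m : ℕ} (z : Fin m → ℂ) : ℝ := Real.sqrt (∑ i, Complex.normSq (z i))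

lemma aux_reIP_add_left {m : ℕ} (x y z : Fin m → ℂ) : reIP (x + y) z = reIP x z + reIP y z := by
  simp [reIP, add_mul, Finset.sum_add_distrib]

lemma aux_reIP_comm {m : ℕ} (x y : Fin m → ℂ) : reIP x y = reIP y x := by
  unfold reIP
  simp only [Complex.re_sum]
  refine Finset.sum_congr rfl fun i _ => ?_
  simp
  ring

lemma aux_reIP_add_right {m : ℕ} (x y z : Fin m → ℂ) : reIP z (x + y) = reIP z x + reIP z y := by
  rw [aux_reIP_comm, aux_reIP_add_left, aux_reIP_comm x, aux_reIP_comm y]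

lemma aux_reIP_smul_left {m : ℕ} (t : ℝ) (x z : Fin m → ℂ) :
    reIP ((t : ℂ) • x) z = t * reIP x z := by
  simp only [reIP, Pi.smul_apply, smul_eq_mul, mul_assoc, ← Finset.mul_sum, Complex.re_ofReal_mul]

lemma aux_reIP_smul_right {m : ℕ} (t : ℝ) (x z : Fin m → ℂ) :
    reIP z ((t : ℂ) • x) = t * reIP z x := by
  rw [aux_reIP_comm, aux_reIP_smul_left, aux_reIP_comm]

lemma aux_reIP_self {m : ℕ} (x : Fin m → ℂ) (h : reIP x x ≤ 0) : x = 0 := by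
  have e : reIP x x = ∑ i, Complex.normSq (x i) := by
    simp [reIP, Complex.re_sum, Complex.normSq_apply]
  rw [e] at h
  have h0 := le_antisymm h (Finset.sum_nonneg fun i _ => Complex.normSq_nonneg (x i))
  rw [Finset.sum_eq_zero_iff_of_nonneg (fun i _ => Complex.normSq_nonneg (x i))] at h0
  funext i
  exact Complex.normSq_eq_zero.mp (h0 i (Finset.mem_univ i))

lemma aux_sym {m : ℕ} (N : Matrix (Fin m) (Fin m) ℝ) (hN : Nᵀ = N) (x y : Fin m → ℂ) :
    reIP ((cmap N).mulVec x) y = reIP ((cmap N).mulVec y) x := by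
  rw [aux_reIP_comm ((cmap N).mulVec y)]
  unfold reIP
  congr 1
  simp only [Matrix.mulVec, dotProduct, cmap, Matrix.map_apply, map_sum, map_mul,
    Complex.conj_ofReal, Finset.sum_mul, Finset.mul_sum]
  rw [Finset.sum_comm]
  refine Finset.sum_congr rfl fun i _ => Finset.sum_congr rfl fun j _ => ?_
  have : N j i = N i j := congrFun (congrFun hN i) j
  rw [this]
  ring

lemma aux_ker {m : ℕ} (N : Matrix (Fin m) (Fin m) ℝ) (hN : Nᵀ = N)
    (hNnn : ∀ z : Fin m → ℂ, 0 ≤ reIP ((cmap N).mulVec z) z) (z : Fin m → ℂ)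
    (hz : reIP ((cmap N).mulVec z) z = 0) : (cmap N).mulVec z = 0 := by
  apply aux_reIP_self
  set w := (cmap N).mulVec z with hw
  have key : ∀ t : ℝ, 0 ≤ 2 * t * reIP w w + t ^ 2 * reIP ((cmap N).mulVec w) w := by
    intro t
    have h := hNnn (z + (t : ℂ) • w)
    rw [Matrix.mulVec_add, Matrix.mulVec_smul, aux_reIP_add_left, aux_reIP_add_right,
      aux_reIP_add_right, aux_reIP_smul_left, aux_reIP_smul_left, aux_reIP_smul_right,
      aux_reIP_smul_right, aux_sym N hN w z, ← hw, hz] at h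
    linarith
  by_contra hc
  push Not at hc
  have hb := hNnn w
  set a := reIP w w
  set b := reIP ((cmap N).mulVec w) w
  have h := key (-(a / (b + 1)))
  have hb1 : 0 < b + 1 := by linarith
  have e : 2 * (-(a / (b + 1))) * a + (-(a / (b + 1))) ^ 2 * b
      = -(a ^ 2 * (b + 2)) / (b + 1) ^ 2 := by
    field_simp
    ring
  rw [e] at h
  have : 0 < a ^ 2 * (b + 2) / (b + 1) ^ 2 := by positivity
  rw [neg_div] at h
  linarith

lemma aux_comb {m : ℕ} (N M : Matrix (Fin m) (Fin m) ℝ) (α : ℝ) (z : Fin m → ℂ) :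
    reIP ((cmap (α • M + N)).mulVec z) z
      = α * reIP ((cmap M).mulVec z) z + reIP ((cmap N).mulVec z) z := by
  have : cmap (α • M + N) = (α : ℂ) • cmap M + cmap N := by
    ext i j
    simp [cmap]
  rw [this, Matrix.add_mulVec, Matrix.smul_mulVec, aux_reIP_add_left, aux_reIP_smul_left]

lemma aux_cont {m : ℕ} (N : Matrix (Fin m) (Fin m) ℝ) :
    Continuous fun z : Fin m → ℂ => reIP ((cmap N).mulVec z) z := by
  unfold reIP
  simp only [Matrix.mulVec, dotProduct]
  refine Complex.continuous_re.comp ?_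
  refine continuous_finset_sum _ fun i _ => ?_
  refine Continuous.mul ?_ (Complex.continuous_conj.comp (continuous_apply i))
  exact continuous_finset_sum _ fun j _ => continuous_const.mul (continuous_apply j)

/-- **Remark 2.** Let `L ≥ 0` (not necessarily symmetric), `N` real symmetric with `N ≥ 0`
and `Ker(N) = Ker(L)`, and `M` real symmetric. Then `M > 0` on `Ker(L)` iff
`αM + N > 0` on `ℂᵐ` for some `α > 0`. -/
theorem positivity_on_kernel_iff_global_nonsymmetric
    (m : ℕ) (hm : 1 ≤ m)
    (L N M : Matrix (Fin m) (Fin m) ℝ)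
    (hLnn : ∀ z : Fin m → ℂ, 0 ≤ reIP ((cmap L).mulVec z) z)
    (hNsym : Nᵀ = N)
    (hNnn : ∀ z : Fin m → ℂ, 0 ≤ reIP ((cmap N).mulVec z) z)
    (hNker : kerC N = kerC L)
    (hMsym : Mᵀ = M) :
    (∀ z ∈ kerC L, z ≠ 0 → 0 < reIP ((cmap M).mulVec z) z) ↔
      (∃ α > (0:ℝ), ∀ z : Fin m → ℂ, z ≠ 0 →
        0 < reIP ((cmap (α • M + N)).mulVec z) z) := by
  constructor
  · intro h
    have hcM := aux_cont M
    have hcN := aux_cont N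
    -- reduction to the sphere
    suffices hs : ∃ α > (0:ℝ), ∀ z ∈ Metric.sphere (0 : Fin m → ℂ) 1,
        0 < reIP ((cmap (α • M + N)).mulVec z) z by
      obtain ⟨α, hα, H⟩ := hs
      refine ⟨α, hα, fun z hz => ?_⟩
      have hn : 0 < ‖z‖ := norm_pos_iff.mpr hz
      have h1 := H (((‖z‖⁻¹ : ℝ) : ℂ) • z) (by
        simp [norm_smul, hn.ne'])
      rw [Matrix.mulVec_smul, aux_reIP_smul_left, aux_reIP_smul_right] at h1
      have hi : 0 < ‖z‖⁻¹ := inv_pos.mpr hn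
      exact pos_of_mul_pos_right (pos_of_mul_pos_right h1 hi.le) hi.le
    have hS : IsCompact (Metric.sphere (0 : Fin m → ℂ) 1) := isCompact_sphere _ _
    have hK : IsCompact (Metric.sphere (0 : Fin m → ℂ) 1 ∩
        {z | reIP ((cmap M).mulVec z) z ≤ 0}) :=
      hS.inter_right (isClosed_le hcM continuous_const)
    rcases Set.eq_empty_or_nonempty (Metric.sphere (0 : Fin m → ℂ) 1 ∩
        {z | reIP ((cmap M).mulVec z) z ≤ 0}) with hE | hE
    · refine ⟨1, one_pos, fun z hz => ?_⟩
      rw [aux_comb]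
      have h1 : 0 < reIP ((cmap M).mulVec z) z := by
        by_contra hc
        have : z ∈ (∅ : Set (Fin m → ℂ)) := hE ▸ ⟨hz, not_lt.mp hc⟩
        exact this
      have := hNnn z
      linarith
    · obtain ⟨z0, hz0, hmin⟩ := hK.exists_isMinOn hE hcN.continuousOn
      obtain ⟨z1, hz1, hmin1⟩ := hK.exists_isMinOn hE hcM.continuousOn
      have hc : 0 < reIP ((cmap N).mulVec z0) z0 := by
        refine lt_of_le_of_ne (hNnn z0) fun he => ?_
        have hk : z0 ∈ kerC L := by
          rw [← hNker]
          exact aux_ker N hNsym hNnn z0 he.symm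
        have hne : z0 ≠ 0 := by
          rintro rfl
          simpa using hz0.1
        exact absurd (h z0 hk hne) (not_lt.mpr hz0.2)
      set c := reIP ((cmap N).mulVec z0) z0
      set B := -reIP ((cmap M).mulVec z1) z1 with hB
      have hB0 : 0 ≤ B := neg_nonneg.mpr hz1.2
      have hα : 0 < c / (B + 1) := by positivity
      refine ⟨c / (B + 1), hα, fun z hz => ?_⟩
      rw [aux_comb]
      by_cases hm' : reIP ((cmap M).mulVec z) z ≤ 0
      · have h1 : c ≤ reIP ((cmap N).mulVec z) z := hmin ⟨hz, hm'⟩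
        have h2 : reIP ((cmap M).mulVec z1) z1 ≤ reIP ((cmap M).mulVec z) z := hmin1 ⟨hz, hm'⟩
        have h3 : c / (B + 1) * (-B) ≤ c / (B + 1) * reIP ((cmap M).mulVec z) z :=
          mul_le_mul_of_nonneg_left (by linarith) hα.le
        have h4 : c / (B + 1) * (-B) = -c + c / (B + 1) := by
          field_simp
          ring
        linarith
      · have := mul_pos hα (not_le.mp hm')
        have := hNnn z
        linarith
  · rintro ⟨α, hα, H⟩ z hz hne
    have h1 := H z hne
    rw [aux_comb] at h1
    rw [← hNker] at hz
    have h2 : (cmap N).mulVec z = 0 := hz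
    have h3 : reIP (0 : Fin m → ℂ) z = 0 := by simp [reIP]
    rw [h2, h3, add_zero] at h1
    exact pos_of_mul_pos_right h1 hα.le
end
end

section
/- Assume conditions (A), (S), (S)₁ and (K). Then the system is uniformly dissipative of type (1,2): there exists a constant c > 0 such that for every r ≥ 0, every ω ∈ S^{n−1}, every λ ∈ ℂ and every nonzero φ ∈ ℂᵐ satisfying (λA⁰ + i r A(ω) + L)φ = 0, one has Re λ ≤ −c η(r), where η(r) = r²/(1 + r²)². -/
open Matrix BigOperators Finset

noncomputable section

def cip {m : ℕ} (x y : Fin m → ℂ) : ℂ := ∑ i, x i * (starRingEnd ℂ) (y i)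

lemma reIP_eq {m : ℕ} (x y : Fin m → ℂ) : reIP x y = (cip x y).re := rfl

lemma cip_add_left {m : ℕ} (x x' y : Fin m → ℂ) : cip (x + x') y = cip x y + cip x' y := by
  simp [cip, add_mul, Finset.sum_add_distrib]

lemma cip_add_right {m : ℕ} (x y y' : Fin m → ℂ) : cip x (y + y') = cip x y + cip x y' := by
  simp [cip, mul_add, Finset.sum_add_distrib]

lemma cip_smul_left {m : ℕ} (a : ℂ) (x y : Fin m → ℂ) : cip (a • x) y = a * cip x y := by
  simp [cip, Finset.mul_sum, mul_assoc]

lemma cip_smul_right {m : ℕ} (a : ℝ) (x y : Fin m → ℂ) :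
    cip x ((a : ℂ) • y) = a * cip x y := by
  simp [cip, Finset.mul_sum]
  exact Finset.sum_congr rfl fun i _ => by ring

lemma cip_swap {m : ℕ} (X : Matrix (Fin m) (Fin m) ℝ) (z w : Fin m → ℂ) :
    cip ((cmap X).mulVec z) w = (starRingEnd ℂ) (cip ((cmap Xᵀ).mulVec w) z) := by
  simp only [cip, cmap, Matrix.mulVec, dotProduct, Matrix.map_apply, Matrix.transpose_apply,
    map_sum, map_mul, Complex.conj_conj, Complex.conj_ofReal, Finset.sum_mul]
  rw [Finset.sum_comm]
  exact Finset.sum_congr rfl fun i _ => Finset.sum_congr rfl fun j _ => by ring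

lemma cmap_add {m : ℕ} (X Y : Matrix (Fin m) (Fin m) ℝ) : cmap (X + Y) = cmap X + cmap Y := by
  ext i j; simp [cmap]

lemma cmap_sub {m : ℕ} (X Y : Matrix (Fin m) (Fin m) ℝ) : cmap (X - Y) = cmap X - cmap Y := by
  ext i j; simp [cmap]

lemma cmap_neg {m : ℕ} (X : Matrix (Fin m) (Fin m) ℝ) : cmap (-X) = -cmap X := by
  ext i j; simp [cmap]

lemma cmap_smul {m : ℕ} (a : ℝ) (X : Matrix (Fin m) (Fin m) ℝ) :
    cmap (a • X) = (a : ℂ) • cmap X := by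
  ext i j; simp [cmap]

lemma cmap_mul {m : ℕ} (X Y : Matrix (Fin m) (Fin m) ℝ) : cmap (X * Y) = cmap X * cmap Y := by
  ext i j; simp [cmap, Matrix.mul_apply]

lemma cip_symm_im {m : ℕ} {X : Matrix (Fin m) (Fin m) ℝ} (h : Xᵀ = X) (z : Fin m → ℂ) :
    (cip ((cmap X).mulVec z) z).im = 0 := by
  have := congrArg Complex.im (cip_swap X z z)
  rw [h] at this
  simp at this; linarith

lemma cip_neg_left {m : ℕ} (x y : Fin m → ℂ) : cip (-x) y = - cip x y := by
  simp [cip]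

lemma cip_skew_re {m : ℕ} {X : Matrix (Fin m) (Fin m) ℝ} (h : Xᵀ = -X) (z : Fin m → ℂ) :
    (cip ((cmap X).mulVec z) z).re = 0 := by
  have := congrArg Complex.re (cip_swap X z z)
  rw [h, cmap_neg, Matrix.neg_mulVec, cip_neg_left] at this
  simp at this; linarith

lemma cip_symP_re {m : ℕ} (X : Matrix (Fin m) (Fin m) ℝ) (z : Fin m → ℂ) :
    (cip ((cmap (symP X)).mulVec z) z).re = (cip ((cmap X).mulVec z) z).re := by
  have := congrArg Complex.re (cip_swap X z z)
  simp only [symP, cmap_smul, cmap_add, Matrix.smul_mulVec, Matrix.add_mulVec, cip_smul_left,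
    cip_add_left, Complex.re_ofReal_mul, Complex.add_re]
  simp at this; linarith

lemma cip_skewP_im {m : ℕ} (X : Matrix (Fin m) (Fin m) ℝ) (z : Fin m → ℂ) :
    (cip ((cmap (skewP X)).mulVec z) z).im = (cip ((cmap X).mulVec z) z).im := by
  have := congrArg Complex.im (cip_swap X z z)
  simp only [skewP, cmap_smul, sub_eq_add_neg, cmap_add, cmap_neg, Matrix.smul_mulVec,
    Matrix.add_mulVec, Matrix.neg_mulVec, cip_smul_left,
    cip_add_left, cip_neg_left, Complex.im_ofReal_mul, Complex.add_im, Complex.neg_im]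
  simp at this; linarith

lemma cip_bound {m : ℕ} (X : Matrix (Fin m) (Fin m) ℝ) (z w : Fin m → ℂ) :
    ‖cip ((cmap X).mulVec z) w‖ ≤ (∑ i, ∑ j, |X i j|) * (‖z‖ * ‖w‖) := by
  simp only [cip, cmap, Matrix.mulVec, dotProduct, Matrix.map_apply, Finset.sum_mul]
  refine (norm_sum_le _ _).trans (Finset.sum_le_sum fun i _ => ?_)
  refine (norm_sum_le _ _).trans (Finset.sum_le_sum fun j _ => ?_)
  rw [norm_mul, norm_mul, Complex.norm_real, RCLike.norm_conj, Real.norm_eq_abs, mul_assoc]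
  have h1 := norm_le_pi_norm z j
  have h2 := norm_le_pi_norm w i
  gcongr

lemma sphere_compact (n : ℕ) : IsCompact {ω : Fin n → ℝ | ∑ j, ω j ^ 2 = 1} := by
  apply Metric.isCompact_of_isClosed_isBounded
  · exact isClosed_eq (by fun_prop) (by fun_prop)
  · refine (Metric.isBounded_closedBall (x := (0 : Fin n → ℝ)) (r := 1)).subset ?_
    intro ω hω
    rw [mem_closedBall_zero_iff, pi_norm_le_iff_of_nonneg zero_le_one]
    intro i
    rw [Real.norm_eq_abs, ← sq_le_one_iff_abs_le_one]
    rw [← hω.out]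
    exact Finset.single_le_sum (f := fun j => ω j ^ 2) (fun j _ => sq_nonneg _) (Finset.mem_univ i)

lemma unif_bound {m n : ℕ} (M : (Fin n → ℝ) → Matrix (Fin m) (Fin m) ℝ) (hM : Continuous M) :
    ∃ C : ℝ, 0 ≤ C ∧ ∀ ω : Fin n → ℝ, (∑ j, ω j ^ 2 = 1) → ∀ z w : Fin m → ℂ,
      ‖cip ((cmap (M ω)).mulVec z) w‖ ≤ C * (‖z‖ * ‖w‖) := by
  have hc : Continuous (fun ω => ∑ i, ∑ j, |M ω i j|) := by
    refine continuous_finsetSum _ fun i _ => continuous_finsetSum _ fun j _ => ?_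
    exact (hM.matrix_elem i j).abs
  obtain ⟨C, hC⟩ := (sphere_compact n).bddAbove_image hc.continuousOn
  refine ⟨max C 0, le_max_right _ _, fun ω hω z w => (cip_bound _ z w).trans ?_⟩
  have := hC (Set.mem_image_of_mem _ hω)
  gcongr
  exact this.trans (le_max_left _ _)

lemma cip_cont {m : ℕ} {T : Type*} [TopologicalSpace T] (M : T → Matrix (Fin m) (Fin m) ℝ)
    (hM : Continuous M) (z : T → Fin m → ℂ) (hz : Continuous z) :
    Continuous (fun t => (cip ((cmap (M t)).mulVec (z t)) (z t)).re) := by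
  simp only [cip, cmap, Matrix.mulVec, dotProduct, Matrix.map_apply]
  refine Complex.continuous_re.comp (continuous_finsetSum _ fun i _ => ?_)
  refine Continuous.mul (continuous_finsetSum _ fun j _ => ?_) ?_
  · exact (Complex.continuous_ofReal.comp (hM.matrix_elem i j)).mul ((continuous_apply j).comp hz)
  · exact Complex.continuous_conj.comp ((continuous_apply i).comp hz)

lemma cip_scale {m : ℕ} (X : Matrix (Fin m) (Fin m) ℝ) (a : ℝ) (z : Fin m → ℂ) :
    (cip ((cmap X).mulVec ((a : ℂ) • z)) ((a : ℂ) • z)).re =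
      a ^ 2 * (cip ((cmap X).mulVec z) z).re := by
  rw [Matrix.mulVec_smul, cip_smul_left, cip_smul_right, Complex.re_ofReal_mul,
    Complex.re_ofReal_mul]
  ring

/-- Uniform coercivity on a subspace. -/
lemma unif_coercive {m n : ℕ} (W : Submodule ℂ (Fin m → ℂ))
    (M : (Fin n → ℝ) → Matrix (Fin m) (Fin m) ℝ) (hM : Continuous M)
    (hpos : ∀ ω : Fin n → ℝ, (∑ j, ω j ^ 2 = 1) → ∀ z ∈ W, z ≠ 0 →
      0 < (cip ((cmap (M ω)).mulVec z) z).re) :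
    ∃ c > (0 : ℝ), ∀ ω : Fin n → ℝ, (∑ j, ω j ^ 2 = 1) → ∀ z ∈ W,
      c * ‖z‖ ^ 2 ≤ (cip ((cmap (M ω)).mulVec z) z).re := by
  have hcomp : IsCompact ({ω : Fin n → ℝ | ∑ j, ω j ^ 2 = 1} ×ˢ
      ((W : Set (Fin m → ℂ)) ∩ Metric.sphere 0 1)) :=
    (sphere_compact n).prod ((isCompact_sphere _ _).inter_left W.closed_of_finiteDimensional)
  obtain ⟨c, hc, h⟩ := hcomp.exists_forall_le' (a := 0)
    (f := fun t : (Fin n → ℝ) × (Fin m → ℂ) => (cip ((cmap (M t.1)).mulVec t.2) t.2).re)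
    (cip_cont _ (hM.comp continuous_fst) _ continuous_snd).continuousOn (by
      rintro ⟨ω, z⟩ ⟨h1, h2, h3⟩
      refine hpos ω h1 z h2 ?_
      rintro rfl
      simp at h3)
  refine ⟨c, hc, fun ω hω z hz => ?_⟩
  by_cases h0 : z = 0
  · subst h0; simp [cip]
  have hn : 0 < ‖z‖ := norm_pos_iff.2 h0
  have h1 := h (ω, (((‖z‖⁻¹ : ℝ) : ℂ) • z)) ⟨hω, W.smul_mem _ hz, by
    simp [norm_smul, hn.ne']⟩
  simp only [cip_scale] at h1
  rw [inv_pow, inv_mul_eq_div, le_div_iff₀ (by positivity)] at h1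
  exact h1

def kerS {m : ℕ} (B : Matrix (Fin m) (Fin m) ℝ) : Submodule ℂ (Fin m → ℂ) :=
  LinearMap.ker (Matrix.mulVecLin (cmap B))

lemma mem_kerS {m : ℕ} (B : Matrix (Fin m) (Fin m) ℝ) (z) : z ∈ kerS B ↔ z ∈ kerC B := by
  simp [kerS, kerC]

lemma psd_zero {m : ℕ} (B : Matrix (Fin m) (Fin m) ℝ) (hB : Bᵀ = B)
    (hpos : ∀ z : Fin m → ℂ, 0 ≤ (cip ((cmap B).mulVec z) z).re) (z : Fin m → ℂ)
    (hz : (cip ((cmap B).mulVec z) z).re = 0) : (cmap B).mulVec z = 0 := by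
  set w := (cmap B).mulVec z with hw
  have hswap : cip ((cmap B).mulVec w) z = (starRingEnd ℂ) (cip w w) := by
    rw [cip_swap, hB]
  -- expand at z - t w
  have key : ∀ t : ℝ, 0 ≤ t ^ 2 * (cip ((cmap B).mulVec w) w).re + 2 * t * (cip w w).re := by
    intro t
    have h := hpos (z + (t : ℂ) • w)
    rw [Matrix.mulVec_add, Matrix.mulVec_smul, ← hw, cip_add_left, cip_add_right, cip_add_right,
      cip_smul_left, cip_smul_right, cip_smul_left, cip_smul_right, hswap] at h
    simp only [Complex.add_re, Complex.re_ofReal_mul, hz, Complex.conj_re] at h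
    linarith
  have hww : (cip w w).re = ∑ i, Complex.normSq (w i) := by
    simp [cip, Complex.mul_conj]
  have hn : 0 ≤ (cip w w).re := by
    rw [hww]; exact Finset.sum_nonneg fun i _ => Complex.normSq_nonneg _
  have h0 : (cip w w).re = 0 := by
    by_contra hne
    have hp : 0 < (cip w w).re := lt_of_le_of_ne hn (Ne.symm hne)
    set N := (cip w w).re
    set Q := (cip ((cmap B).mulVec w) w).re with hQ
    have hQn : 0 ≤ Q := hpos w
    have hk := key (-(N / (Q + 1)))
    have : N / (Q + 1) * (Q + 1) = N := by field_simp
    set u := N / (Q + 1)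
    have hu : 0 < u := by positivity
    rw [← this] at hk
    nlinarith [mul_pos hu hu, mul_nonneg hQn (mul_pos hu hu).le]
  rw [hww] at h0
  funext i
  have := (Finset.sum_eq_zero_iff_of_nonneg (fun i _ => Complex.normSq_nonneg _)).1 h0 i
    (Finset.mem_univ i)
  simpa using this

lemma decomp {m : ℕ} (B : Matrix (Fin m) (Fin m) ℝ) (hB : Bᵀ = B)
    (hpos : ∀ z : Fin m → ℂ, 0 ≤ (cip ((cmap B).mulVec z) z).re) :
    ∃ c > (0 : ℝ), ∀ z : Fin m → ℂ, ∃ p q : Fin m → ℂ, z = p + q ∧ p ∈ kerC B ∧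
      c * ‖q‖ ^ 2 ≤ (cip ((cmap B).mulVec z) z).re := by
  obtain ⟨W, hW⟩ := Submodule.exists_isCompl (kerS B)
  obtain ⟨c, hc, h⟩ := unif_coercive (n := 1) W (fun _ => B) continuous_const (by
    intro _ _ z hz hz0
    refine lt_of_le_of_ne (hpos z) fun h0 => hz0 ?_
    have : z ∈ kerS B := (mem_kerS B z).2 (psd_zero B hB hpos z h0.symm)
    exact (Submodule.disjoint_def.1 hW.disjoint) z this hz)
  refine ⟨c, hc, fun z => ?_⟩
  have : z ∈ kerS B ⊔ W := by rw [hW.sup_eq_top]; trivial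
  obtain ⟨p, hp, q, hq, rfl⟩ := Submodule.mem_sup.1 this
  refine ⟨p, q, rfl, (mem_kerS B p).1 hp, ?_⟩
  have hp0 : (cmap B).mulVec p = 0 := (mem_kerS B p).1 hp
  have h1 := h (fun _ => 1) (by simp) q hq
  rw [Matrix.mulVec_add, hp0, zero_add, cip_add_right, cip_swap B q p, hB, hp0]
  simpa [cip] using h1

/-- perturbation: `M(p+q,p+q)` versus `M(p,p)`. -/
lemma cip_perturb {m : ℕ} (X : Matrix (Fin m) (Fin m) ℝ) (C : ℝ) (hC : 0 ≤ C)
    (hX : ∀ z w : Fin m → ℂ, ‖cip ((cmap X).mulVec z) w‖ ≤ C * (‖z‖ * ‖w‖))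
    (z p q : Fin m → ℂ) (h : z = p + q) (hz : ‖z‖ = 1) :
    ‖cip ((cmap X).mulVec z) z - cip ((cmap X).mulVec p) p‖ ≤ C * (‖q‖ * (2 + ‖q‖)) := by
  have e : cip ((cmap X).mulVec z) z - cip ((cmap X).mulVec p) p =
      cip ((cmap X).mulVec z) q + cip ((cmap X).mulVec q) p := by
    subst h
    simp only [Matrix.mulVec_add, cip_add_left, cip_add_right]; ring
  rw [e]
  have h1 := hX z q
  have h2 := hX q p
  have hp : ‖p‖ ≤ 1 + ‖q‖ := by
    have : p = z - q := by rw [h]; simp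
    rw [this, ← hz]; exact norm_sub_le _ _
  have h3 : ‖q‖ * ‖p‖ ≤ ‖q‖ * (1 + ‖q‖) := by gcongr
  have h4 := mul_le_mul_of_nonneg_left h3 hC
  rw [hz] at h1
  refine (norm_add_le _ _).trans ?_
  linarith

set_option maxHeartbeats 2000000 in
lemma scalar_final (C : ℝ) (hC : 1 ≤ C) :
    ∃ d > (0 : ℝ), ∀ r x a q : ℝ, 0 < r → 0 ≤ x → 0 ≤ a → 0 ≤ q → a ^ 2 ≤ C * x →
      q ^ 2 ≤ C * (x + r * a + r * a ^ 2) → r ≤ C * (x + q + r * q + r * q ^ 2) →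
      d * (r ^ 2 / (1 + r ^ 2) ^ 2) ≤ x := by
  have hC0 : 0 < C := by linarith
  obtain ⟨μ, hμ⟩ : ∃ μ, μ = 1 / (8 * C) := ⟨_, rfl⟩
  obtain ⟨δ, hδ⟩ : ∃ δ, δ = μ ^ 2 / (3 * C ^ 3) := ⟨_, rfl⟩
  have hμ0 : 0 < μ := by rw [hμ]; positivity
  have hδ0 : 0 < δ := by rw [hδ]; positivity
  have hμC : 8 * C * μ = 1 := by rw [hμ]; field_simp
  have hδC : 3 * C ^ 3 * δ = μ ^ 2 := by rw [hδ]; field_simp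
  have hμ1 : μ ≤ 1 := by nlinarith
  have hC3 : 1 ≤ C ^ 3 := one_le_pow₀ hC
  have hδμ : δ ≤ μ := by nlinarith
  refine ⟨δ ^ 2, by positivity, fun r x a q hr hx ha hq h1 h2 h3 => ?_⟩
  by_contra hlt
  push Not at hlt
  obtain ⟨s, hs⟩ : ∃ s, s = δ * (r / (1 + r ^ 2)) := ⟨_, rfl⟩
  have hs0 : 0 < s := by rw [hs]; positivity
  have hxs : x ≤ s ^ 2 := by
    rw [hs, mul_pow, div_pow]; exact hlt.le
  have hsr : s ≤ δ * r := by
    rw [hs]; gcongr; exact div_le_self hr.le (by nlinarith)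
  have hs1 : s ≤ δ := by
    rw [hs]; refine mul_le_of_le_one_right hδ0.le ?_
    rw [div_le_one (by positivity)]; nlinarith [sq_nonneg (r - 1)]
  have hrs : r * s ≤ δ := by
    rw [hs]
    have : r * (δ * (r / (1 + r ^ 2))) = δ * (r ^ 2 / (1 + r ^ 2)) := by ring
    rw [this]; refine mul_le_of_le_one_right hδ0.le ?_
    rw [div_le_one (by positivity)]; linarith
  have hs1' : s ≤ 1 := by linarith
  have haC : a ≤ C * s := by
    have : a ^ 2 ≤ (C * s) ^ 2 := by
      calc a ^ 2 ≤ C * x := h1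
        _ ≤ C * s ^ 2 := by gcongr
        _ ≤ C ^ 2 * s ^ 2 := by gcongr; nlinarith
        _ = _ := by ring
    exact (pow_le_pow_iff_left₀ ha (by positivity) two_ne_zero).1 this
  have hrs0 : 0 < r * s := by positivity
  have e1 : s ^ 2 ≤ r * s := by nlinarith
  have e2 : r * a ≤ C * (r * s) := by nlinarith
  have e3 : r * a ^ 2 ≤ C ^ 2 * (r * s) := by
    have : a ^ 2 ≤ (C * s) ^ 2 := by gcongr
    have h5 : s ^ 2 ≤ s := by nlinarith
    calc r * a ^ 2 ≤ r * (C * s) ^ 2 := by gcongr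
      _ = C ^ 2 * (r * s ^ 2) := by ring
      _ ≤ C ^ 2 * (r * s) := by gcongr
  have hq2 : q ^ 2 ≤ 3 * C ^ 3 * (r * s) := by
    have c2 : C ≤ C ^ 2 := by nlinarith
    have c1 : 1 + C + C ^ 2 ≤ 3 * C ^ 2 := by nlinarith
    calc q ^ 2 ≤ C * (x + r * a + r * a ^ 2) := h2
      _ ≤ C * (r * s + C * (r * s) + C ^ 2 * (r * s)) := by gcongr; linarith
      _ = C * ((1 + C + C ^ 2) * (r * s)) := by ring
      _ ≤ C * ((3 * C ^ 2) * (r * s)) := by gcongr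
      _ = _ := by ring
  have hqa : q ≤ μ := by
    have : q ^ 2 ≤ μ ^ 2 := by
      rw [← hδC]; exact hq2.trans (by gcongr)
    exact (pow_le_pow_iff_left₀ hq hμ0.le two_ne_zero).1 this
  have hqb : q ≤ μ * r := by
    have : q ^ 2 ≤ (μ * r) ^ 2 := by
      rw [mul_pow, ← hδC]
      calc q ^ 2 ≤ _ := hq2
        _ ≤ 3 * C ^ 3 * (r * (δ * r)) := by gcongr
        _ = _ := by ring
    exact (pow_le_pow_iff_left₀ hq (by positivity) two_ne_zero).1 this
  have f1 : x ≤ μ * r := by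
    calc x ≤ s * s := by linarith [sq s]
      _ ≤ 1 * (δ * r) := by gcongr
      _ ≤ μ * r := by rw [one_mul]; gcongr
  have f2 : r * q ≤ μ * r := by
    have h6 := mul_le_mul_of_nonneg_left hqa hr.le
    linarith
  have f3 : r * q ^ 2 ≤ μ * r := by
    have h5 : q ^ 2 ≤ μ := by
      calc q ^ 2 = q * q := sq q
        _ ≤ μ * 1 := by gcongr; linarith
        _ = μ := mul_one μ
    have h6 := mul_le_mul_of_nonneg_left h5 hr.le
    linarith
  have : r ≤ C * (4 * (μ * r)) := h3.trans (by gcongr; linarith)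
  have h7 : C * (4 * (μ * r)) = (8 * C * μ) * r / 2 := by ring
  rw [h7, hμC] at this
  linarith

set_option maxHeartbeats 4000000 in
/-- **Theorem 4.2 (i) (uniform dissipativity of type (1,2)).**
Under conditions (A), (S), (S)₁ and (K), every eigenvalue of `(λA⁰ + i r A(ω) + L)φ = 0`
satisfies `Re λ ≤ −c η(r)` with `η(r) = r²/(1+r²)²`. -/
theorem uniform_dissipativity_type_one_two
    (m n : ℕ) (hm : 1 ≤ m) (hn : 1 ≤ n)
    (A0 : Matrix (Fin m) (Fin m) ℝ) (A : Fin n → Matrix (Fin m) (Fin m) ℝ)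
    (L : Matrix (Fin m) (Fin m) ℝ)
    -- condition (A)
    (hA0sym : A0ᵀ = A0) (hAsym : ∀ j, (A j)ᵀ = A j)
    (hA0pos : ∀ z : Fin m → ℂ, z ≠ 0 → 0 < reIP ((cmap A0).mulVec z) z)
    (hLnn : ∀ z : Fin m → ℂ, 0 ≤ reIP ((cmap L).mulVec z) z)
    (hLker : ∃ z : Fin m → ℂ, z ≠ 0 ∧ z ∈ kerC L)
    -- condition (S)
    (S : Matrix (Fin m) (Fin m) ℝ)
    (hSA0 : (S * A0)ᵀ = S * A0)
    (hSLnn : ∀ z : Fin m → ℂ, 0 ≤ reIP ((cmap (symP (S * L) + symP L)).mulVec z) z)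
    (hSLker : kerC (symP (S * L) + symP L) = kerC L)
    -- condition (S)₁ : `i(SA(ω))₂ ≥ 0` on `Ker(L₁)`
    (hS1 : ∀ ω : Fin n → ℝ, (∑ j, ω j ^ 2 = 1) → ∀ z ∈ kerC (symP L),
      0 ≤ reIP ((Complex.I • cmap (skewP (S * (∑ j, ω j • A j)))).mulVec z) z)
    -- condition (K): a smooth compensating matrix family
    (K : (Fin n → ℝ) → Matrix (Fin m) (Fin m) ℝ)
    (hKsmooth : ∀ i j, ContDiff ℝ (⊤ : ℕ∞) (fun ω => K ω i j))
    (hKodd : ∀ ω : Fin n → ℝ, (∑ j, ω j ^ 2 = 1) → K (-ω) = - K ω)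
    (hKA0 : ∀ ω : Fin n → ℝ, (∑ j, ω j ^ 2 = 1) → (K ω * A0)ᵀ = -(K ω * A0))
    (hKpos : ∀ ω : Fin n → ℝ, (∑ j, ω j ^ 2 = 1) → ∀ z ∈ kerC L, z ≠ 0 →
      0 < reIP ((cmap (symP (K ω * (∑ j, ω j • A j)))).mulVec z) z) :
    ∃ c > (0:ℝ), ∀ r : ℝ, 0 ≤ r → ∀ ω : Fin n → ℝ, (∑ j, ω j ^ 2 = 1) →
      ∀ lam : ℂ, ∀ phi : Fin m → ℂ, phi ≠ 0 →
      (lam • cmap A0 + ((r : ℂ) * Complex.I) • cmap (∑ j, ω j • A j) + cmap L).mulVec phi = 0 →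
      lam.re ≤ -(c * (r ^ 2 / (1 + r ^ 2) ^ 2)) := by
  classical
  have hAc : Continuous (fun ω : Fin n → ℝ => ∑ j, ω j • A j) := by fun_prop
  have hKc : Continuous K :=
    continuous_matrix fun i j => (hKsmooth i j).continuous
  have hKAc : Continuous (fun ω : Fin n → ℝ => K ω * (∑ j, ω j • A j)) := hKc.matrix_mul hAc
  have hSAc : Continuous (fun ω : Fin n → ℝ => skewP (S * (∑ j, ω j • A j))) := by
    have h : Continuous (fun ω : Fin n → ℝ => S * (∑ j, ω j • A j)) :=
      continuous_const.matrix_mul hAc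
    exact (h.sub h.matrix_transpose).const_smul (2⁻¹ : ℝ)
  obtain ⟨C0, hC0, b0⟩ := unif_bound (n := n) (fun _ => A0) continuous_const
  obtain ⟨C1, hC1, b1⟩ := unif_bound (n := n) (fun _ => S * A0) continuous_const
  obtain ⟨C2, hC2, b2⟩ := unif_bound _ hSAc
  obtain ⟨C3, hC3, b3⟩ := unif_bound (fun ω => K ω * A0) (hKc.matrix_mul continuous_const)
  obtain ⟨C4, hC4, b4⟩ := unif_bound (fun ω => K ω * L) (hKc.matrix_mul continuous_const)
  obtain ⟨C5, hC5, b5⟩ := unif_bound _ hKAc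
  have symT : ∀ X : Matrix (Fin m) (Fin m) ℝ, (symP X)ᵀ = symP X := by
    intro X; simp [symP, add_comm]
  obtain ⟨c1, hc1, d1⟩ := decomp (symP L) (symT L) (fun z => by
    rw [cip_symP_re]; exact hLnn z)
  obtain ⟨c2, hc2, d2⟩ := decomp (symP (S * L) + symP L)
    (by rw [Matrix.transpose_add, symT, symT]) hSLnn
  obtain ⟨c3, hc3, d3⟩ := unif_coercive (kerS L) _ hKAc (fun ω hω z hz hz0 => by
    have := hKpos ω hω z ((mem_kerS L z).1 hz) hz0
    rwa [reIP_eq, cip_symP_re] at this)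
  obtain ⟨C, hC⟩ : ∃ C, C = C0 + C1 + C2 + C3 + C4 + C5 := ⟨_, rfl⟩
  have hCn : 0 ≤ C := by rw [hC]; positivity
  obtain ⟨C', hC'⟩ : ∃ C', C' = 1 + 2 * C / c1 + 2 * C / c2 + (2 * C / c3 + 2) := ⟨_, rfl⟩
  have p1 : 0 ≤ 2 * C / c1 := by positivity
  have p2 : 0 ≤ 2 * C / c2 := by positivity
  have p3 : 0 ≤ 2 * C / c3 := by positivity
  obtain ⟨d, hd, hfin⟩ := scalar_final C' (by rw [hC']; linarith)
  refine ⟨d, hd, ?_⟩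
  -- the normalized case
  have main : ∀ r : ℝ, 0 ≤ r → ∀ ω : Fin n → ℝ, (∑ j, ω j ^ 2 = 1) →
      ∀ lam : ℂ, ∀ phi : Fin m → ℂ, ‖phi‖ = 1 →
      (lam • cmap A0 + ((r : ℂ) * Complex.I) • cmap (∑ j, ω j • A j) + cmap L).mulVec phi = 0 →
      lam.re ≤ -(d * (r ^ 2 / (1 + r ^ 2) ^ 2)) := by
    intro r hr ω hω lam phi hphi heq
    have b0 := b0 ω hω
    have b1 := b1 ω hω
    have b2 := b2 ω hω
    have b3 := b3 ω hω
    have b4 := b4 ω hω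
    have b5 := b5 ω hω
    have d3 := d3 ω hω
    have hS1 := hS1 ω hω
    have hKA0 := hKA0 ω hω
    beta_reduce at b0 b1 b2 b3 b4 b5 d3
    have hAs : (∑ j, ω j • A j)ᵀ = ∑ j, ω j • A j := by
      rw [Matrix.transpose_sum]
      exact Finset.sum_congr rfl fun j _ => by rw [Matrix.transpose_smul, hAsym]
    generalize (∑ j, ω j • A j) = Aw at *
    generalize K ω = Kw at *
    have gen : ∀ X : Matrix (Fin m) (Fin m) ℝ,
        lam * cip ((cmap (X * A0)).mulVec phi) phi
        + (r : ℂ) * Complex.I * cip ((cmap (X * Aw)).mulVec phi) phi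
        + cip ((cmap (X * L)).mulVec phi) phi = 0 := by
      intro X
      have h := congrArg (fun v => cip ((cmap X).mulVec v) phi) heq
      simp only [Matrix.add_mulVec, Matrix.smul_mulVec, Matrix.mulVec_add, Matrix.mulVec_smul,
        cip_add_left, cip_smul_left, Matrix.mulVec_mulVec, ← cmap_mul] at h
      rw [h]; simp [cip]
    have hx0 : 0 < (cip ((cmap A0).mulVec phi) phi).re := by
      apply hA0pos
      rintro rfl
      simp at hphi
    -- energy identity
    have e1 : lam.re * (cip ((cmap A0).mulVec phi) phi).re
        + (cip ((cmap L).mulVec phi) phi).re = 0 := by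
      have h := congrArg Complex.re (gen 1)
      simp only [one_mul] at h
      have i1 := cip_symm_im hA0sym phi
      have i2 := cip_symm_im hAs phi
      simp [i1, i2] at h
      linarith
    have e2 : lam.re * (cip ((cmap (S * A0)).mulVec phi) phi).re
        - r * (cip ((cmap (S * Aw)).mulVec phi) phi).im
        + (cip ((cmap (S * L)).mulVec phi) phi).re = 0 := by
      have h := congrArg Complex.re (gen S)
      have i1 := cip_symm_im hSA0 phi
      simp [i1] at h
      linarith
    have e3 : lam.re * (cip ((cmap (Kw * A0)).mulVec phi) phi).im
        + r * (cip ((cmap (Kw * Aw)).mulVec phi) phi).re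
        + (cip ((cmap (Kw * L)).mulVec phi) phi).im = 0 := by
      have h := congrArg Complex.im (gen Kw)
      have i1 := cip_skew_re hKA0 phi
      simp [i1] at h
      linarith
    obtain ⟨x, hx⟩ : ∃ x, x = -lam.re := ⟨_, rfl⟩
    have hlam : lam.re = -x := by rw [hx]; ring
    rw [hlam] at e1 e2 e3 ⊢
    have hxn : 0 ≤ x := by
      have := hLnn phi
      rw [reIP_eq] at this
      by_contra hneg
      push Not at hneg
      nlinarith [mul_pos (neg_pos.2 hneg) hx0]
    rcases hr.eq_or_lt with hr0 | hr0
    · rw [← hr0]; simpa using hxn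
    obtain ⟨p, a, hpa, hp, ha⟩ := d1 phi
    obtain ⟨p', q, hpq, hp', hq⟩ := d2 phi
    rw [cip_symP_re] at ha
    rw [cmap_add, Matrix.add_mulVec, cip_add_left, Complex.add_re, cip_symP_re, cip_symP_re] at hq
    rw [hSLker] at hp'
    have u0 := (Complex.re_le_norm _).trans (b0 phi phi)
    have u1 := (Complex.re_le_norm _).trans (b1 phi phi)
    have u3 := ((Complex.abs_im_le_norm _).trans (b3 phi phi))
    rw [hphi, mul_one, mul_one] at u0 u1 u3
    have v0 := mul_le_mul_of_nonneg_left u0 hxn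
    have v1 := mul_le_mul_of_nonneg_left u1 hxn
    have v3 := mul_le_mul_of_nonneg_left ((le_abs_self _).trans u3) hxn
    have hna := norm_nonneg a
    have hnq := norm_nonneg q
    -- S estimate
    have s1 : (cip ((cmap (S * Aw)).mulVec phi) phi).im ≤ C2 * (‖a‖ * (2 + ‖a‖)) := by
      have h := (Complex.abs_im_le_norm _).trans
        (cip_perturb _ C2 hC2 b2 phi p a hpa hphi)
      have h' := (le_abs_self _).trans h
      have h2 := hS1 p hp
      rw [reIP_eq, Matrix.smul_mulVec, cip_smul_left] at h2
      simp only [Complex.mul_re, Complex.I_re, Complex.I_im, zero_mul, one_mul, zero_sub] at h2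
      rw [Complex.sub_im, cip_skewP_im _ phi] at h'
      linarith
    have s2 := mul_le_mul_of_nonneg_left s1 hr
    -- K estimate
    have k1 : c3 * (1 - 2 * ‖q‖) - C5 * (‖q‖ * (2 + ‖q‖)) ≤
        (cip ((cmap (Kw * Aw)).mulVec phi) phi).re := by
      have h := (Complex.abs_re_le_norm _).trans
        (cip_perturb _ C5 hC5 b5 phi p' q hpq hphi)
      have h' := (neg_abs_le _).trans' (neg_le_neg h)
      rw [Complex.sub_re] at h'
      have h2 := d3 p' ((mem_kerS L p').2 hp')
      have h3 : 1 - ‖q‖ ≤ ‖p'‖ := by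
        have := norm_add_le p' q
        rw [← hpq, hphi] at this; linarith
      have h4 : 1 - 2 * ‖q‖ ≤ ‖p'‖ ^ 2 := by nlinarith [sq_nonneg (‖p'‖ - 1)]
      have h5 := mul_le_mul_of_nonneg_left h4 hc3.le
      linarith
    have k2 := mul_le_mul_of_nonneg_left k1 hr
    have k3 : -(C4 * ‖q‖) ≤ (cip ((cmap (Kw * L)).mulVec phi) phi).im := by
      have h0 : (cmap (Kw * L)).mulVec phi = (cmap (Kw * L)).mulVec q := by
        have hz : (cmap L).mulVec p' = 0 := hp'
        rw [hpq, Matrix.mulVec_add, cmap_mul, ← Matrix.mulVec_mulVec p', hz]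
        simp
      rw [h0]
      have h := (Complex.abs_im_le_norm _).trans (b4 q phi)
      rw [hphi, mul_one] at h
      exact (neg_abs_le _).trans' (neg_le_neg h)
    generalize ‖a‖ = α at *
    generalize ‖q‖ = β at *
    have l0 : C0 ≤ C := by rw [hC]; linarith
    have l01 : C0 + C1 ≤ 2 * C := by rw [hC]; linarith
    have l2 : C2 ≤ C := by rw [hC]; linarith
    have l3 : C3 ≤ C := by rw [hC]; linarith
    have l4 : C4 ≤ C := by rw [hC]; linarith
    have l5 : C5 ≤ C := by rw [hC]; linarith
    have w1 : c1 * α ^ 2 ≤ x * C := by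
      have := mul_le_mul_of_nonneg_left l0 hxn
      linarith
    have w2 : c2 * β ^ 2 ≤ 2 * C * (x + r * α + r * α ^ 2) := by
      have t1 := mul_le_mul_of_nonneg_left l01 hxn
      have t2 : r * (C2 * (α * (2 + α))) ≤ r * (C * (α * (2 + α))) := by gcongr
      have t3 : 0 ≤ C * (r * α ^ 2) := by positivity
      linarith
    have w3 : c3 * r ≤ (2 * C + 2 * c3) * (x + β + r * β + r * β ^ 2) := by
      have t1 := mul_le_mul_of_nonneg_left l3 hxn
      have t2 := mul_le_mul_of_nonneg_right l4 hnq
      have t3 : r * (C5 * (β * (2 + β))) ≤ r * (C * (β * (2 + β))) := by gcongr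
      have t4 : 0 ≤ C * (r * β ^ 2) := by positivity
      have t5 : 0 ≤ C * x := by positivity
      have t6 : 0 ≤ C * β := by positivity
      have t7 : 0 ≤ c3 * (x + β + r * β ^ 2) := by positivity
      linarith
    have hfin := hfin r x α β hr0 hxn hna hnq ?_ ?_ ?_
    · linarith
    · have : α ^ 2 ≤ (C / c1) * x := by
        rw [div_mul_eq_mul_div, le_div_iff₀ hc1]; linarith
      refine this.trans (mul_le_mul_of_nonneg_right ?_ hxn)
      have : 0 ≤ C / c1 := by positivity
      have e : 2 * C / c1 = 2 * (C / c1) := by ring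
      rw [hC']; linarith
    · have : β ^ 2 ≤ (2 * C / c2) * (x + r * α + r * α ^ 2) := by
        rw [div_mul_eq_mul_div, le_div_iff₀ hc2]; linarith
      refine this.trans (mul_le_mul_of_nonneg_right ?_ (by positivity))
      rw [hC']; linarith
    · have : r ≤ (2 * C / c3 + 2) * (x + β + r * β + r * β ^ 2) := by
        have e : 2 * C / c3 + 2 = (2 * C + 2 * c3) / c3 := by field_simp
        rw [e, div_mul_eq_mul_div, le_div_iff₀ hc3]; linarith
      refine this.trans (mul_le_mul_of_nonneg_right ?_ (by positivity))
      rw [hC']; linarith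
  intro r hr ω hω lam phi hphi heq
  refine main r hr ω hω lam (((‖phi‖⁻¹ : ℝ) : ℂ) • phi) ?_ ?_
  · have := norm_ne_zero_iff.2 hphi
    simp [norm_smul, this]
  · rw [Matrix.mulVec_smul, heq, smul_zero]
end
end
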